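/- For every ε > 0 there exist a finite set S of points in the plane in convex position and in general position and a directed edge a→b of Θ₆(S) such that every path between a and b in ΘΘ₆(S) has length at least (4 − ε)·|ab|. Hence the constant 4 in the statement 'every Θ₆-edge of a convex-position point set is spanned in ΘΘ₆ by a path of length at most 4 times its length' cannot be replaced by any smaller constant. -/

import Mathlib

/-!
The extremal configuration is half of a regular hexagon. Let `b, c, d, e` be four consecutive
vertices of a regular hexagon with centre `a`, so that all of `ab, ac, ad, ae, bc, cd, de` have the
same length and `a` is the midpoint of the segment `be`. A perturbation of size `δ` pushes `a` out
of the segment `be` (giving convex position), makes all directions generic, and yields a `Θ₆`-edge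
`a → b` that `ΘΘ₆` discards at `b` in favour of `c → b`. Likewise `a → c` is discarded in favour of
`d → c`, and `a → d` in favour of `e → d`; the reversed edges and the remaining diagonals also fail
to appear. Hence `ΘΘ₆` is contained in the path `a, e, d, c, b`, of length about `4 |ab|`.

Points are written in the coordinates `(x, y) ↦ x + y√3 i`, in which the cone boundaries are the
lines `y = 0`, `y = ± x` and projective distances are `√3 / 2` times integral linear forms. Both
facts come from `info_of_rotation`: every cone is a rotation of the first one. With the twenty
cones and projective distances of the five points recorded (`DirInfo`), edges and non-edges reduce
to linear inequalities in `δ` (`thetaEdge_of_alone`, `not_thetaEdge`, `not_thetaThetaEdge`). The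
length bound follows by telescoping a potential that grows by at most `|uv|` along every
edge (`potential_le_pathLength`).
-/

open Real

noncomputable section

/-- Counterclockwise angle in `[0, 2π)` from the positive x-axis to the direction of `z`. -/
def argIn (z : ℂ) : ℝ := if 0 ≤ Complex.arg z then Complex.arg z else Complex.arg z + 2 * π

/-- The half-open cone `C_i(u)` with apex `u`: points `p ≠ u` whose direction from `u` has
counterclockwise angle in `[(i-1)π/3, iπ/3)`. -/
def cone (i : ℕ) (u : ℂ) : Set ℂ :=
  {p | p ≠ u ∧ argIn (p - u) ∈ Set.Ico (((i : ℝ) - 1) * (π / 3)) ((i : ℝ) * (π / 3))}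

/-- The index `i ∈ {1, …, 6}` of the cone of `u` containing `v`. -/
def coneIdx (u v : ℂ) : ℕ := (⌊argIn (v - u) / (π / 3)⌋).toNat + 1

/-- The angle of the bisector ray of the cone of `u` containing `v`. -/
def bisAngle (u v : ℂ) : ℝ := ((coneIdx u v : ℝ) - 1) * (π / 3) + π / 6

/-- The projective distance from `u` to `v`: the Euclidean distance from `u` to the
orthogonal projection of `v` onto the bisector ray of the cone of `u` containing `v`. -/
def projDist (u v : ℂ) : ℝ :=
  ((v - u) * Complex.exp (-(Complex.I * (bisAngle u v : ℂ)))).re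

/-- `S` is in general position: no two points of `S` lie on a common line parallel to one of
the six rays from the origin at angles `jπ/3`. -/
def GenPos (S : Finset ℂ) : Prop :=
  ∀ u ∈ S, ∀ v ∈ S, u ≠ v → ∀ j : ℕ, argIn (v - u) ≠ (j : ℝ) * (π / 3)

/-- `S` is in convex position: every point of `S` is an extreme point of the convex hull. -/
def ConvexPos (S : Finset ℂ) : Prop :=
  ∀ p ∈ S, p ∈ Set.extremePoints ℝ (convexHull ℝ (S : Set ℂ))

/-- `u → v` is a directed edge of `Θ₆(S)`: `v` minimizes the projective distance from `u`
among the points of `S` in the cone of `u` containing `v`. -/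
def ThetaEdge (S : Finset ℂ) (u v : ℂ) : Prop :=
  u ∈ S ∧ v ∈ S ∧ v ≠ u ∧
    ∀ w ∈ S, w ∈ cone (coneIdx u v) u → projDist u v ≤ projDist u w

/-- `u → v` is a directed edge of `ΘΘ₆(S)`: it is an edge of `Θ₆(S)` and among all incoming
`Θ₆`-edges `w → v` with `w` in the same cone of `v` as `u`, it minimizes `‖wv‖`. -/
def ThetaThetaEdge (S : Finset ℂ) (u v : ℂ) : Prop :=
  ThetaEdge S u v ∧
    ∀ w, ThetaEdge S w v → coneIdx v w = coneIdx v u → projDist u v ≤ projDist w v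

/-- Undirected adjacency in `ΘΘ₆(S)`: paths may use edges in either direction. -/
def TTAdj (S : Finset ℂ) (u v : ℂ) : Prop := ThetaThetaEdge S u v ∨ ThetaThetaEdge S v u

/-- `p` is a path between `u` and `v` with respect to the adjacency relation `A`. -/
def IsPath (A : ℂ → ℂ → Prop) (u v : ℂ) (p : List ℂ) : Prop :=
  p.Chain' A ∧ p.head? = some u ∧ p.getLast? = some v

/-- The Euclidean length of the polygonal path through the points of `p`. -/
def pathLength (p : List ℂ) : ℝ := (List.zipWith dist p p.tail).sum


/-! ### Directions and projective distances -/

/-- The direction from `u` to `v` lies strictly inside the cone with index `k + 1`, and the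
projective distance is `√3 / 2 * d`. -/
def DirInfo (u v : ℂ) (k : ℕ) (d : ℝ) : Prop :=
  (k : ℝ) * (π / 3) < argIn (v - u) ∧ argIn (v - u) < ((k : ℝ) + 1) * (π / 3) ∧
    projDist u v = √3 / 2 * d

/-- The point with scaled coordinates `(x, y)`: the second coordinate is scaled by `√3`. -/
def pt (x y : ℝ) : ℂ := ⟨x, y * √3⟩

lemma argIn_polar {r θ : ℝ} (hr : 0 < r) (h0 : 0 ≤ θ) (h1 : θ < 2 * π) :
    argIn (r * Complex.exp (θ * Complex.I)) = θ := by
  have hpi := Real.pi_pos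
  rw [Complex.exp_mul_I]
  unfold argIn
  by_cases h : θ ≤ π
  · rw [Complex.arg_mul_cos_add_sin_mul_I hr ⟨by linarith, h⟩, if_pos h0]
  · push Not at h
    have e : (Complex.cos θ + Complex.sin θ * Complex.I)
        = Complex.cos ((θ - 2 * π : ℝ)) + Complex.sin ((θ - 2 * π : ℝ)) * Complex.I := by
      push_cast
      rw [Complex.cos_sub_two_pi, Complex.sin_sub_two_pi]
    rw [e, Complex.arg_mul_cos_add_sin_mul_I hr ⟨by linarith, by linarith⟩,
      if_neg (by linarith)]
    ring

lemma argIn_nonneg (z : ℂ) : 0 ≤ argIn z := by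
  unfold argIn
  split_ifs with h
  · exact h
  · have := Complex.neg_pi_lt_arg z
    have := Real.pi_pos
    linarith

lemma coneIdx_eq {u v : ℂ} {k : ℕ} (h0 : (k : ℝ) * (π / 3) ≤ argIn (v - u))
    (h1 : argIn (v - u) < ((k : ℝ) + 1) * (π / 3)) : coneIdx u v = k + 1 := by
  have hpi : 0 < π / 3 := by positivity
  have : ⌊argIn (v - u) / (π / 3)⌋ = (k : ℤ) := by
    rw [Int.floor_eq_iff]
    constructor
    · rw [le_div_iff₀ hpi]
      exact_mod_cast h0
    · rw [div_lt_iff₀ hpi]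
      exact_mod_cast h1
  simp [coneIdx, this]

lemma arg_pt {X Y : ℝ} (hY : 0 < Y) (hXY : Y < X) :
    0 < Complex.arg (pt X Y) ∧ Complex.arg (pt X Y) < π / 3 := by
  have h3 : 0 < √3 := by positivity
  have hpi := Real.pi_pos
  have hz : pt X Y ≠ 0 := fun h => by
    have := congrArg Complex.re h
    simp [pt] at this
    linarith
  have hn : 0 < ‖pt X Y‖ := norm_pos_iff.mpr hz
  have hre : ‖pt X Y‖ * cos (Complex.arg (pt X Y)) = X := Complex.norm_mul_cos_arg _
  have him : ‖pt X Y‖ * sin (Complex.arg (pt X Y)) = Y * √3 := Complex.norm_mul_sin_arg _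
  have hlt := Complex.arg_le_pi (pt X Y)
  constructor
  · have h0 : 0 ≤ Complex.arg (pt X Y) := Complex.arg_nonneg_iff.mpr (by
      simp only [pt]; positivity)
    refine lt_of_le_of_ne h0 fun h => ?_
    rw [← h, sin_zero] at him
    have : 0 < Y * √3 := by positivity
    linarith
  · by_contra! h
    -- the sign of `sin (arg - π / 3)` decides on which side of the ray `y = x` the point lies
    have hs : 0 ≤ sin (Complex.arg (pt X Y) - π / 3) :=
      sin_nonneg_of_nonneg_of_le_pi (by linarith) (by linarith)
    rw [sin_sub, cos_pi_div_three, sin_pi_div_three] at hs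
    have := mul_nonneg hn.le hs
    have e : ‖pt X Y‖ * (sin (Complex.arg (pt X Y)) * (1 / 2)
        - cos (Complex.arg (pt X Y)) * (√3 / 2)) = √3 / 2 * (Y - X) := by
      linear_combination (1 / 2) * him - (√3 / 2) * hre
    rw [e] at this
    nlinarith

/-- Every cone is the first cone rotated by a multiple of `π / 3`. -/
lemma info_of_rotation {u v : ℂ} {k : ℕ} (hk : k < 6) {X Y : ℝ} (hY : 0 < Y) (hXY : Y < X)
    (h : v - u = pt X Y * Complex.exp (Complex.I * ((k * (π / 3) : ℝ) : ℂ))) :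
    DirInfo u v k (X + Y) := by
  have hpi := Real.pi_pos
  obtain ⟨h0, h1⟩ := arg_pt hY hXY
  have hn : 0 < ‖pt X Y‖ := norm_pos_iff.mpr fun h => by
    rw [h] at h0
    simp at h0
  have hk' : (k : ℝ) ≤ 5 := by exact_mod_cast Nat.lt_succ_iff.mp hk
  have hk0 : (0 : ℝ) ≤ k := Nat.cast_nonneg k
  have harg : argIn (v - u) = Complex.arg (pt X Y) + k * (π / 3) := by
    rw [← argIn_polar (θ := Complex.arg (pt X Y) + k * (π / 3)) hn (by positivity)
      (by nlinarith), h]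
    congr 1
    conv_lhs => rw [← Complex.norm_mul_exp_arg_mul_I (pt X Y)]
    rw [mul_assoc, ← Complex.exp_add]
    congr 2
    push_cast
    ring
  have hl : (k : ℝ) * (π / 3) < argIn (v - u) := by rw [harg]; linarith
  have hu : argIn (v - u) < ((k : ℝ) + 1) * (π / 3) := by rw [harg]; linarith
  refine ⟨hl, hu, ?_⟩
  have hb : bisAngle u v = k * (π / 3) + π / 6 := by
    rw [bisAngle, coneIdx_eq hl.le hu]
    push_cast
    ring
  have e : (v - u) * Complex.exp (-(Complex.I * (bisAngle u v : ℂ)))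
      = pt X Y * Complex.exp (((-(π / 6) : ℝ) : ℂ) * Complex.I) := by
    rw [h, hb, mul_assoc, ← Complex.exp_add]
    congr 2
    push_cast
    ring
  rw [projDist, e, Complex.mul_re, Complex.exp_ofReal_mul_I_re, Complex.exp_ofReal_mul_I_im,
    cos_neg, sin_neg, cos_pi_div_six, sin_pi_div_six]
  simp only [pt]
  ring

lemma exp_rotation (k : ℕ) : Complex.exp (Complex.I * ((k * (π / 3) : ℝ) : ℂ))
    = (pt (1 / 2) (1 / 2)) ^ k := by
  have : Complex.exp (((π / 3 : ℝ) : ℂ) * Complex.I) = pt (1 / 2) (1 / 2) := by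
    apply Complex.ext
    · rw [Complex.exp_ofReal_mul_I_re, cos_pi_div_three]
      rfl
    · rw [Complex.exp_ofReal_mul_I_im, sin_pi_div_three]
      simp only [pt]
      ring
  rw [← this, ← Complex.exp_nat_mul]
  congr 1
  push_cast
  ring

lemma pt_mul (x y x' y' : ℝ) : pt x y * pt x' y' = pt (x * x' - 3 * (y * y')) (x * y' + y * x') := by
  have h3 : √3 * √3 = 3 := Real.mul_self_sqrt (by norm_num)
  apply Complex.ext
  · simp only [pt, Complex.mul_re]
    linear_combination (-(y * y')) * h3
  · simp only [pt, Complex.mul_im]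
    ring

lemma pt_sub (x y x' y' : ℝ) : pt x y - pt x' y' = pt (x - x') (y - y') := by
  apply Complex.ext
  · simp [pt]
  · simp only [pt, Complex.sub_im]
    ring

lemma info_cone_one {x y x' y' d : ℝ} (h0 : 0 < y' - y) (h1 : y' - y < x' - x)
    (hd : d = (x' - x) + (y' - y)) :
    DirInfo (pt x y) (pt x' y') 0 d ∧ DirInfo (pt x' y') (pt x y) 3 d := by
  subst hd
  constructor <;> refine info_of_rotation (by norm_num) h0 h1 ?_ <;>
    rw [exp_rotation, pt_sub] <;> simp only [pow_succ, pow_zero, one_mul, pt_mul] <;>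
    congr 1 <;> ring

lemma info_cone_two {x y x' y' d : ℝ} (h0 : x' - x < y' - y) (h1 : -(x' - x) < y' - y)
    (hd : d = 2 * (y' - y)) :
    DirInfo (pt x y) (pt x' y') 1 d ∧ DirInfo (pt x' y') (pt x y) 4 d := by
  have e : d = ((x' - x) + 3 * (y' - y)) / 2 + ((y' - y) - (x' - x)) / 2 := by rw [hd]; ring
  subst e
  constructor <;> refine info_of_rotation (by norm_num) (by linarith) (by linarith) ?_ <;>
    rw [exp_rotation, pt_sub] <;> simp only [pow_succ, pow_zero, one_mul, pt_mul] <;>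
    congr 1 <;> ring

lemma info_cone_three {x y x' y' d : ℝ} (h0 : 0 < y' - y) (h1 : y' - y < -(x' - x))
    (hd : d = (y' - y) - (x' - x)) :
    DirInfo (pt x y) (pt x' y') 2 d ∧ DirInfo (pt x' y') (pt x y) 5 d := by
  have e : d = (3 * (y' - y) - (x' - x)) / 2 + (-(x' - x) - (y' - y)) / 2 := by rw [hd]; ring
  subst e
  constructor <;> refine info_of_rotation (by norm_num) (by linarith) (by linarith) ?_ <;>
    rw [exp_rotation, pt_sub] <;> simp only [pow_succ, pow_zero, one_mul, pt_mul] <;>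
    congr 1 <;> ring

/-! ### Edges and non-edges -/

namespace DirInfo

variable {u v w : ℂ} {k l : ℕ} {d d' : ℝ}

lemma coneIdx_eq (h : DirInfo u v k d) : coneIdx u v = k + 1 := _root_.coneIdx_eq h.1.le h.2.1

lemma ne (h : DirInfo u v k d) : v ≠ u := fun e => by
  have h1 := h.1
  have : 0 ≤ (k : ℝ) * (π / 3) := by positivity
  simp [e, argIn] at h1
  linarith

lemma mem_cone (h : DirInfo u v k d) : v ∈ cone (k + 1) u := by
  refine ⟨h.ne, ?_, ?_⟩
  · push_cast
    have := h.1
    linarith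
  · push_cast
    exact h.2.1

lemma eq_of_mem_cone (h : DirInfo u v k d) (hv : v ∈ cone (l + 1) u) : l = k := by
  have h1 := hv.2.1
  have h2 := hv.2.2
  push_cast at h1 h2
  have := _root_.coneIdx_eq (u := u) (v := v) (k := l) (by linarith) (by linarith)
  have := h.coneIdx_eq
  omega

/-- A direction strictly inside a cone is not parallel to any of the six rays. -/
lemma argIn_ne (h : DirInfo u v k d) (j : ℕ) : argIn (v - u) ≠ (j : ℝ) * (π / 3) := fun e => by
  have h1 := h.1
  have h2 := h.2.1
  have hpi : 0 < π / 3 := by positivity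
  rw [e] at h1 h2
  have h1' : k < j := by exact_mod_cast lt_of_mul_lt_mul_right h1 hpi.le
  have h2' : j < k + 1 := by exact_mod_cast lt_of_mul_lt_mul_right h2 hpi.le
  omega

end DirInfo

lemma thetaEdge_of_alone {S : Finset ℂ} {u v : ℂ} {k : ℕ} {d : ℝ} (hu : u ∈ S) (hv : v ∈ S)
    (h : DirInfo u v k d)
    (hS : ∀ w ∈ S, w = u ∨ w = v ∨ ∃ l d', DirInfo u w l d' ∧ l ≠ k) : ThetaEdge S u v := by
  refine ⟨hu, hv, h.ne, fun w hw hwc => ?_⟩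
  rw [h.coneIdx_eq] at hwc
  rcases hS w hw with rfl | rfl | ⟨l, d', hl, hne⟩
  · exact absurd rfl hwc.1
  · exact le_rfl
  · exact absurd (hl.eq_of_mem_cone hwc).symm hne

lemma not_thetaEdge {S : Finset ℂ} {u v w : ℂ} {k : ℕ} {d d' : ℝ} (hw : w ∈ S)
    (h : DirInfo u v k d) (h' : DirInfo u w k d') (hd : d' < d) : ¬ ThetaEdge S u v := fun e => by
  have := e.2.2.2 w hw (by rw [h.coneIdx_eq]; exact h'.mem_cone)
  rw [h.2.2, h'.2.2] at this
  have h3 : 0 < √3 / 2 := by positivity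
  nlinarith

lemma not_thetaThetaEdge {S : Finset ℂ} {u v w : ℂ} {k l l' : ℕ} {d d' e e' : ℝ}
    (hw : ThetaEdge S w v) (h : DirInfo v u k e) (h' : DirInfo v w k e')
    (hu : DirInfo u v l d) (hu' : DirInfo w v l' d') (hd : d' < d) :
    ¬ ThetaThetaEdge S u v := fun t => by
  have := t.2 w hw (by rw [h.coneIdx_eq, h'.coneIdx_eq])
  rw [hu.2.2, hu'.2.2] at this
  have h3 : 0 < √3 / 2 := by positivity
  nlinarith

/-! ### Convex position and path lengths -/

/-- A unique maximizer of a linear functional on `S` is an extreme point of the hull of `S`. -/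
lemma extreme_of_functional {S : Finset ℂ} {p : ℂ} (hp : p ∈ S) (α β : ℝ)
    (h : ∀ q ∈ S, q = p ∨ α * q.re + β * (q.im / √3) < α * p.re + β * (p.im / √3)) :
    p ∈ Set.extremePoints ℝ (convexHull ℝ (S : Set ℂ)) := by
  set ℓ : ℂ → ℝ := fun q => α * q.re + β * (q.im / √3) with hℓ
  have hlin : ∀ (s t : ℝ) (x y : ℂ), ℓ (s • x + t • y) = s * ℓ x + t * ℓ y := by
    intro s t x y
    simp only [hℓ, Complex.add_re, Complex.add_im, Complex.smul_re, Complex.smul_im, smul_eq_mul]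
    ring
  have hconv : Convex ℝ {q : ℂ | q = p ∨ ℓ q < ℓ p} := by
    intro x hx y hy s t hs ht hst
    rcases hs.eq_or_lt with rfl | hs
    · have : t = 1 := by linarith
      subst this
      simpa using hy
    rcases ht.eq_or_lt with rfl | ht
    · have : s = 1 := by linarith
      subst this
      simpa using hx
    have hs1 : s = 1 - t := by linarith
    rcases hx with rfl | hx
    · rcases hy with rfl | hy
      · left
        rw [← add_smul, hst, one_smul]
      · right
        rw [hlin]
        subst hs1
        nlinarith
    · right
      rw [hlin]
      have hy' : ℓ y ≤ ℓ p := by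
        rcases hy with rfl | hy
        · exact le_rfl
        · exact hy.le
      subst hs1
      nlinarith
  have hsub : convexHull ℝ (S : Set ℂ) ⊆ {q : ℂ | q = p ∨ ℓ q < ℓ p} :=
    convexHull_min (fun q hq => h q hq) hconv
  rw [mem_extremePoints_iff_left]
  refine ⟨subset_convexHull ℝ _ hp, fun x hx y hy hxy => ?_⟩
  obtain ⟨s, t, hs, ht, hst, hpe⟩ := hxy
  rcases hsub hx with hx | hx
  · exact hx
  · exfalso
    have hy' : ℓ y ≤ ℓ p := by
      rcases hsub hy with hy | hy
      · rw [hy]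
      · exact le_of_lt hy
    have e := hlin s t x y
    rw [hpe] at e
    have hs1 : s = 1 - t := by linarith
    subst hs1
    nlinarith

lemma potential_le_pathLength {A : ℂ → ℂ → Prop} (f : ℂ → ℝ)
    (hf : ∀ u v, A u v → f v - f u ≤ dist u v) (v : ℂ) :
    ∀ (p : List ℂ) (u : ℂ), IsPath A u v p → f v - f u ≤ pathLength p := by
  intro p
  induction p with
  | nil => intro u h; simp [IsPath] at h
  | cons x t ih =>
    intro u h
    obtain ⟨hc, hh, hl⟩ := h
    have hxu : x = u := by simpa using hh
    subst hxu
    cases t with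
    | nil =>
      have : x = v := by simpa using hl
      subst this
      simp [pathLength]
    | cons y t =>
      have hc' := List.isChain_cons_cons.mp hc
      have h1 := ih y ⟨hc'.2, rfl, by simpa using hl⟩
      have h2 := hf x y hc'.1
      have e : pathLength (x :: y :: t) = dist x y + pathLength (y :: t) := by
        simp [pathLength]
      linarith

lemma dist_pt (x y x' y' : ℝ) :
    dist (pt x y) (pt x' y') = √((x - x') ^ 2 + 3 * (y - y') ^ 2) := by
  have h3 : √3 * √3 = 3 := Real.mul_self_sqrt (by norm_num)
  rw [Complex.dist_eq_re_im]
  congr 1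
  simp only [pt]
  linear_combination (y - y') ^ 2 * h3

/-! ### The perturbed half hexagon -/

/-- The five-point configuration with perturbation parameter `δ`. -/
lemma half_hexagon {δ : ℝ} (hδ : 0 < δ) (hδ1 : δ ≤ 1 / 100) :
    ∃ (S : Finset ℂ) (a b : ℂ), ConvexPos S ∧ GenPos S ∧ ThetaEdge S a b ∧
      dist a b ≤ 2 + 8 * δ ∧
      ∀ p : List ℂ, IsPath (TTAdj S) a b p → 4 * (2 - 6 * δ) ≤ pathLength p := by
  classical
  obtain ⟨a, ha⟩ : ∃ a, a = pt 0 0 := ⟨_, rfl⟩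
  obtain ⟨b, hb⟩ : ∃ b, b = pt (1 + 3 * δ) (-1 - 4 * δ) := ⟨_, rfl⟩
  obtain ⟨c, hc⟩ : ∃ c, c = pt (2 + 5 * δ) (-δ) := ⟨_, rfl⟩
  obtain ⟨d, hd⟩ : ∃ d, d = pt (1 + δ) 1 := ⟨_, rfl⟩
  obtain ⟨e, he⟩ : ∃ e, e = pt (-1 + 5 * δ) (1 - 2 * δ) := ⟨_, rfl⟩
  obtain ⟨hba, hab⟩ : DirInfo b a 1 (2 + 8 * δ) ∧ DirInfo a b 4 (2 + 8 * δ) := by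
    rw [ha, hb]; apply info_cone_two <;> linarith
  obtain ⟨hca, hac⟩ : DirInfo c a 2 (2 + 6 * δ) ∧ DirInfo a c 5 (2 + 6 * δ) := by
    rw [ha, hc]; apply info_cone_three <;> linarith
  obtain ⟨had, hda⟩ : DirInfo a d 0 (2 + δ) ∧ DirInfo d a 3 (2 + δ) := by
    rw [ha, hd]; apply info_cone_one <;> linarith
  obtain ⟨hae, hea⟩ : DirInfo a e 1 (2 - 4 * δ) ∧ DirInfo e a 4 (2 - 4 * δ) := by
    rw [ha, he]; apply info_cone_two <;> linarith
  obtain ⟨hbc, hcb⟩ : DirInfo b c 1 (2 + 6 * δ) ∧ DirInfo c b 4 (2 + 6 * δ) := by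
    rw [hb, hc]; apply info_cone_two <;> linarith
  obtain ⟨hbd, hdb⟩ : DirInfo b d 1 (4 + 8 * δ) ∧ DirInfo d b 4 (4 + 8 * δ) := by
    rw [hb, hd]; apply info_cone_two <;> linarith
  obtain ⟨hbe, heb⟩ : DirInfo b e 1 (4 + 4 * δ) ∧ DirInfo e b 4 (4 + 4 * δ) := by
    rw [hb, he]; apply info_cone_two <;> linarith
  obtain ⟨hcd, hdc⟩ : DirInfo c d 2 (2 + 5 * δ) ∧ DirInfo d c 5 (2 + 5 * δ) := by
    rw [hc, hd]; apply info_cone_three <;> linarith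
  obtain ⟨hce, hec⟩ : DirInfo c e 2 (4 - δ) ∧ DirInfo e c 5 (4 - δ) := by
    rw [hc, he]; apply info_cone_three <;> linarith
  obtain ⟨hed, hde⟩ : DirInfo e d 0 (2 - 2 * δ) ∧ DirInfo d e 3 (2 - 2 * δ) := by
    rw [hd, he]; apply info_cone_one <;> linarith
  obtain ⟨S, hS⟩ : ∃ S : Finset ℂ, S = {a, b, c, d, e} := ⟨_, rfl⟩
  have hmem : ∀ w, w ∈ S ↔ w = a ∨ w = b ∨ w = c ∨ w = d ∨ w = e := by
    intro w; rw [hS]; simp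
  have haS : a ∈ S := by simp [hmem]
  have hbS : b ∈ S := by simp [hmem]
  have hcS : c ∈ S := by simp [hmem]
  have hdS : d ∈ S := by simp [hmem]
  have heS : e ∈ S := by simp [hmem]
  have tab : ThetaEdge S a b := thetaEdge_of_alone haS hbS hab fun w hw => by
    rcases (hmem w).1 hw with rfl | rfl | rfl | rfl | rfl
    · exact .inl rfl
    · exact .inr (.inl rfl)
    · exact .inr (.inr ⟨_, _, hac, by norm_num⟩)
    · exact .inr (.inr ⟨_, _, had, by norm_num⟩)
    · exact .inr (.inr ⟨_, _, hae, by norm_num⟩)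
  have tcb : ThetaEdge S c b := thetaEdge_of_alone hcS hbS hcb fun w hw => by
    rcases (hmem w).1 hw with rfl | rfl | rfl | rfl | rfl
    · exact .inr (.inr ⟨_, _, hca, by norm_num⟩)
    · exact .inr (.inl rfl)
    · exact .inl rfl
    · exact .inr (.inr ⟨_, _, hcd, by norm_num⟩)
    · exact .inr (.inr ⟨_, _, hce, by norm_num⟩)
  have tdc : ThetaEdge S d c := thetaEdge_of_alone hdS hcS hdc fun w hw => by
    rcases (hmem w).1 hw with rfl | rfl | rfl | rfl | rfl
    · exact .inr (.inr ⟨_, _, hda, by norm_num⟩)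
    · exact .inr (.inr ⟨_, _, hdb, by norm_num⟩)
    · exact .inr (.inl rfl)
    · exact .inl rfl
    · exact .inr (.inr ⟨_, _, hde, by norm_num⟩)
  have ted : ThetaEdge S e d := thetaEdge_of_alone heS hdS hed fun w hw => by
    rcases (hmem w).1 hw with rfl | rfl | rfl | rfl | rfl
    · exact .inr (.inr ⟨_, _, hea, by norm_num⟩)
    · exact .inr (.inr ⟨_, _, heb, by norm_num⟩)
    · exact .inr (.inr ⟨_, _, hec, by norm_num⟩)
    · exact .inr (.inl rfl)
    · exact .inl rfl
  -- the six pairs other than the consecutive ones of `a, e, d, c, b` are non-adjacent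
  have nab : ¬ TTAdj S a b := fun h => h.elim
    (not_thetaThetaEdge tcb hba hbc hab hcb (by linarith))
    (fun h => not_thetaEdge hcS hba hbc (by linarith) h.1)
  have nac : ¬ TTAdj S a c := fun h => h.elim
    (not_thetaThetaEdge tdc hca hcd hac hdc (by linarith))
    (fun h => not_thetaEdge hdS hca hcd (by linarith) h.1)
  have nad : ¬ TTAdj S a d := fun h => h.elim
    (not_thetaThetaEdge ted hda hde had hed (by linarith))
    (fun h => not_thetaEdge heS hda hde (by linarith) h.1)
  have nbd : ¬ TTAdj S b d := fun h => h.elim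
    (fun h => not_thetaEdge hcS hbd hbc (by linarith) h.1)
    (not_thetaThetaEdge tcb hbd hbc hdb hcb (by linarith))
  have nbe : ¬ TTAdj S b e := fun h => h.elim
    (fun h => not_thetaEdge hcS hbe hbc (by linarith) h.1)
    (fun h => not_thetaEdge haS heb hea (by linarith) h.1)
  have nce : ¬ TTAdj S c e := fun h => h.elim
    (fun h => not_thetaEdge hdS hce hcd (by linarith) h.1)
    (not_thetaThetaEdge tdc hce hcd hec hdc (by linarith))
  have dae : 2 - 6 * δ ≤ dist a e := by
    rw [ha, he, dist_pt]; apply Real.le_sqrt_of_sq_le; nlinarith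
  have dde : 2 - 6 * δ ≤ dist d e := by
    rw [hd, he, dist_pt]; apply Real.le_sqrt_of_sq_le; nlinarith
  have dcd : 2 - 6 * δ ≤ dist c d := by
    rw [hc, hd, dist_pt]; apply Real.le_sqrt_of_sq_le; nlinarith
  have dbc : 2 - 6 * δ ≤ dist b c := by
    rw [hb, hc, dist_pt]; apply Real.le_sqrt_of_sq_le; nlinarith
  have dab : dist a b ≤ 2 + 8 * δ := by
    rw [ha, hb, dist_pt]; apply Real.sqrt_le_iff.mpr; constructor <;> nlinarith
  have h3 : √3 ≠ 0 := by positivity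
  refine ⟨S, a, b, ?_, ?_, tab, dab, ?_⟩
  -- supporting functionals; the one at `a` must tilt with `δ` to separate `a` from both `b`, `e`
  · have val : ∀ α β s t : ℝ, α * (pt s t).re + β * ((pt s t).im / √3) = α * s + β * t := by
      intro α β s t
      simp only [pt, mul_div_cancel_right₀ _ h3]
    have ext : ∀ p ∈ S, ∀ α β : ℝ,
        (∀ q ∈ S, q = p ∨ α * q.re + β * (q.im / √3) < α * p.re + β * (p.im / √3)) →
        p ∈ Set.extremePoints ℝ (convexHull ℝ (S : Set ℂ)) :=
      fun p hp α β => extreme_of_functional hp α β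
    intro p hp
    rcases (hmem p).1 hp with h | h | h | h | h
    · refine ext p hp (-(1 + 2 * δ)) (-1) fun q hq => ?_
      rcases (hmem q).1 hq with h' | h' | h' | h' | h'
      · exact .inl (h'.trans h.symm)
      all_goals right; simp only [h, h', ha, hb, hc, hd, he, val]; nlinarith
    · refine ext p hp 0 (-1) fun q hq => ?_
      rcases (hmem q).1 hq with h' | h' | h' | h' | h'
      rotate_left
      · exact .inl (h'.trans h.symm)
      all_goals right; simp only [h, h', ha, hb, hc, hd, he, val]; linarith
    · refine ext p hp 1 0 fun q hq => ?_
      rcases (hmem q).1 hq with h' | h' | h' | h' | h'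
      rotate_left 2
      · exact .inl (h'.trans h.symm)
      all_goals right; simp only [h, h', ha, hb, hc, hd, he, val]; linarith
    · refine ext p hp 0 1 fun q hq => ?_
      rcases (hmem q).1 hq with h' | h' | h' | h' | h'
      rotate_left 3
      · exact .inl (h'.trans h.symm)
      all_goals right; simp only [h, h', ha, hb, hc, hd, he, val]; linarith
    · refine ext p hp (-1) 0 fun q hq => ?_
      rcases (hmem q).1 hq with h' | h' | h' | h' | h'
      rotate_left 4
      · exact .inl (h'.trans h.symm)
      all_goals right; simp only [h, h', ha, hb, hc, hd, he, val]; linarith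
  · intro u hu v hv huv j
    obtain ⟨k, x, h⟩ : ∃ k x, DirInfo u v k x := by
      rcases (hmem u).1 hu with h | h | h | h | h <;>
        rcases (hmem v).1 hv with h' | h' | h' | h' | h' <;>
        first
        | exact absurd (h.trans h'.symm) huv
        | (rw [h, h']; exact ⟨_, _, by assumption⟩)
    exact h.argIn_ne j
  · intro p hp
    -- the potential counts the steps from `a` along the path `a, e, d, c, b`
    obtain ⟨f, fa, fb, fc, fd, fe⟩ : ∃ f : ℂ → ℝ, f a = 0 ∧ f b = 4 * (2 - 6 * δ) ∧
        f c = 3 * (2 - 6 * δ) ∧ f d = 2 * (2 - 6 * δ) ∧ f e = 2 - 6 * δ := by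
      refine ⟨fun z => if z = a then 0 else if z = b then 4 * (2 - 6 * δ) else
        if z = c then 3 * (2 - 6 * δ) else if z = d then 2 * (2 - 6 * δ) else 2 - 6 * δ, ?_⟩
      simp [hab.ne, hac.ne, had.ne, hae.ne, hbc.ne, hbd.ne, hbe.ne, hcd.ne, hce.ne, hde.ne]
    have hstep : ∀ u v, TTAdj S u v → f v - f u ≤ dist u v := by
      intro u v h
      have hu : u ∈ S := h.elim (fun h => h.1.1) (fun h => h.1.2.1)
      have hv : v ∈ S := h.elim (fun h => h.1.2.1) (fun h => h.1.1)
      have h' : TTAdj S v u := h.symm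
      have hn : 0 ≤ dist u v := dist_nonneg
      have hcomm := dist_comm u v
      rcases (hmem u).1 hu with k | k | k | k | k <;>
        rcases (hmem v).1 hv with k' | k' | k' | k' | k' <;>
        rw [k, k'] at h h' hn hcomm ⊢ <;>
        first
        | contradiction
        | (simp only [fa, fb, fc, fd, fe]; linarith)
    have := potential_le_pathLength f hstep b p a hp
    linarith

/-- For every `ε > 0` there is a finite set `S` in convex and general
position and a `Θ₆(S)`-edge `a → b` such that every path between `a` and `b` in `ΘΘ₆(S)` has
length at least `(4 - ε)·|ab|`; hence the constant `4` in Statement 1 is optimal. -/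
theorem thetaTheta6_edge_bound_four_tight :
    (∀ ε : ℝ, 0 < ε → ∃ S : Finset ℂ, ConvexPos S ∧ GenPos S ∧
      ∃ a b : ℂ, ThetaEdge S a b ∧
        ∀ p : List ℂ, IsPath (TTAdj S) a b p → (4 - ε) * dist a b ≤ pathLength p) ∧
    (∀ t : ℝ, t < 4 →
      ¬ ∀ S : Finset ℂ, ConvexPos S → GenPos S → ∀ a b : ℂ, ThetaEdge S a b →
          ∃ p : List ℂ, IsPath (TTAdj S) a b p ∧ pathLength p ≤ t * dist a b) := by
  have main : ∀ ε : ℝ, 0 < ε → ∃ S : Finset ℂ, ConvexPos S ∧ GenPos S ∧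
      ∃ a b : ℂ, ThetaEdge S a b ∧
        ∀ p : List ℂ, IsPath (TTAdj S) a b p → (4 - ε) * dist a b ≤ pathLength p := by
    intro ε hε
    -- `|ab| ≤ 2 + 8 δ` and each step costs at least `2 - 6 δ`, so `56 δ ≤ 2 ε` is enough
    obtain ⟨δ, hδ, hδ1, hδε⟩ : ∃ δ : ℝ, 0 < δ ∧ δ ≤ 1 / 100 ∧ δ ≤ ε / 28 :=
      ⟨min (1 / 100) (ε / 28), by positivity, min_le_left _ _, min_le_right _ _⟩
    obtain ⟨S, a, b, hC, hG, hab, hd, hpath⟩ := half_hexagon hδ hδ1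
    refine ⟨S, hC, hG, a, b, hab, fun p hp => le_trans ?_ (hpath p hp)⟩
    have hnn : 0 ≤ dist a b := dist_nonneg
    rcases le_total ε 4 with h4 | h4
    · nlinarith
    · nlinarith
  refine ⟨main, fun t ht H => ?_⟩
  obtain ⟨S, hC, hG, a, b, hab, hpath⟩ := main ((4 - t) / 2) (by linarith)
  obtain ⟨p, hp, hlen⟩ := H S hC hG a b hab
  have h1 := hpath p hp
  have h2 : 0 < dist a b := dist_pos.mpr hab.2.2.1.symm
  nlinarith

end
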